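/- Let A be a Noetherian ring, B = A[Y]/I a finitely presented A-algebra with Y = (Y_1,…,Y_n), and P a prime ideal of B. Then the localization B_P is essentially smooth over A (i.e., a localization of a smooth A-algebra at a prime ideal) if and only if P does not contain H_{B/A}. -/

import Mathlib

open MvPolynomial

universe u

/-- The ideal `Δ_f` generated by all `r × r` minors of the Jacobian matrix `(∂f_i/∂Y_j)`. -/
noncomputable def jacobiDelta {A : Type*} [CommRing A] {n r : ℕ}
    (f : Fin r → MvPolynomial (Fin n) A) : Ideal (MvPolynomial (Fin n) A) :=
  Ideal.span { m | ∃ c : Fin r → Fin n, Function.Injective c ∧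
    m = Matrix.det (Matrix.of fun i j : Fin r => MvPolynomial.pderiv (c j) (f i)) }

/-- The ideal `Σ_f ((f) : I)·Δ_f` of `A[Y]`, the sum being over all systems
`f = (f₁, …, f_r)` of polynomials from `I` with `r ≤ n`. -/
noncomputable def preHIdeal {A : Type*} [CommRing A] {n : ℕ}
    (I : Ideal (MvPolynomial (Fin n) A)) : Ideal (MvPolynomial (Fin n) A) :=
  ⨆ (r : ℕ) (_ : r ≤ n) (f : Fin r → MvPolynomial (Fin n) A) (_ : ∀ i, f i ∈ I),
    (Submodule.colon (Ideal.span (Set.range f)) I) * jacobiDelta f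

/-- The ideal `H_{B/A} ⊆ B` for `B = A[Y]/I`. -/
noncomputable def HIdeal {A : Type*} [CommRing A] {n : ℕ}
    (I : Ideal (MvPolynomial (Fin n) A)) : Ideal (MvPolynomial (Fin n) A ⧸ I) :=
  (Ideal.map (Ideal.Quotient.mk I) (preHIdeal I)).radical

open TensorProduct KaehlerDifferential

theorem minor_of_linearIndependent {K : Type*} [Field K] {r n : ℕ} (M : Fin r → Fin n → K)
    (h : LinearIndependent K M) :
    ∃ c : Fin r → Fin n, Function.Injective c ∧
      (Matrix.of fun i j : Fin r => M i (c j)).det ≠ 0 := by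
  obtain ⟨κ, a, ha, hspan, hli⟩ := exists_linearIndependent' K (fun j i => M i j)
  have hrank : (Matrix.of M).rank = r := by
    have := LinearIndependent.rank_matrix (M := Matrix.of M) h
    simpa using this
  have htop : Submodule.span K (Set.range (fun j i => M i j)) = ⊤ := by
    apply Submodule.eq_top_of_finrank_eq
    have := (Matrix.of M).rank_eq_finrank_span_cols
    rw [hrank] at this
    rw [Module.finrank_fin_fun]
    exact this.symm
  rw [htop] at hspan
  let b := Module.Basis.mk hli hspan.ge
  let e : Fin r ≃ κ := (Pi.basisFun K (Fin r)).indexEquiv b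
  refine ⟨a ∘ e, ha.comp e.injective, ?_⟩
  have h2 : LinearIndependent K (fun j : Fin r => fun i => M i (a (e j))) :=
    hli.comp e e.injective
  have h3 := (Matrix.linearIndependent_cols_iff_isUnit
    (A := Matrix.of fun i j : Fin r => M i ((a ∘ e) j))).mp h2
  exact ((Matrix.isUnit_iff_isUnit_det _).mp h3).ne_zero

theorem linearIndependent_of_minor {K : Type*} [Field K] {r n : ℕ} (M : Fin r → Fin n → K)
    (c : Fin r → Fin n) (h : (Matrix.of fun i j : Fin r => M i (c j)).det ≠ 0) :
    LinearIndependent K M := by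
  have h3 := Matrix.linearIndependent_rows_iff_isUnit.mpr
    ((Matrix.isUnit_iff_isUnit_det (Matrix.of fun i j : Fin r => M i (c j))).mpr h.isUnit)
  exact LinearIndependent.of_comp (LinearMap.funLeft K K c) h3

theorem local_criterion {A : Type u} [CommRing A] [IsNoetherianRing A]
    {n : ℕ} (I : Ideal (MvPolynomial (Fin n) A)) (P : Ideal (MvPolynomial (Fin n) A))
    [P.IsPrime] (T : Type u) [CommRing T] [Algebra (MvPolynomial (Fin n) A) T]
    [IsLocalization.AtPrime T P] [IsLocalRing T] [Algebra A T]
    [IsScalarTower A (MvPolynomial (Fin n) A) T]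
    (L : Type u) [CommRing L] [IsLocalRing L] [Algebra A L] [Algebra T L] [IsScalarTower A T L]
    (hsurj : Function.Surjective (algebraMap T L))
    (hker : ∀ t : T, algebraMap T L t = 0 ↔ ∃ u ∉ P, ∃ p ∈ I,
      algebraMap (MvPolynomial (Fin n) A) T u * t = algebraMap _ T p) :
    Algebra.FormallySmooth A L ↔ ∃ (r : ℕ) (_ : r ≤ n) (f : Fin r → MvPolynomial (Fin n) A)
      (_ : ∀ i, f i ∈ I) (c : Fin r → Fin n) (_ : Function.Injective c),
      (∃ s ∉ P, ∀ p ∈ I, s * p ∈ Ideal.span (Set.range f)) ∧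
      Matrix.det (Matrix.of fun i j : Fin r => MvPolynomial.pderiv (c j) (f i)) ∉ P := by
  classical
  let K := IsLocalRing.ResidueField T
  have hk : ∀ a, algebraMap T L a = 0 → algebraMap T K a = 0 := by
    intro a ha
    refine (IsLocalRing.residue_eq_zero_iff a).mpr ?_
    rw [IsLocalRing.mem_maximalIdeal]
    intro hu
    exact not_isUnit_zero (ha ▸ hu.map (algebraMap T L))
  let g : L →+* K := RingHom.liftOfSurjective (algebraMap T L) hsurj
    ⟨algebraMap T K, fun a ha => hk a ha⟩
  have hg : ∀ t, g (algebraMap T L t) = algebraMap T K t := fun t => by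
    exact RingHom.liftOfRightInverse_comp_apply (algebraMap T L) _ (Function.rightInverse_surjInv hsurj) _ t
  let : Algebra L K := g.toAlgebra
  have : IsScalarTower T L K := IsScalarTower.of_algebraMap_eq fun t => (hg t).symm
  have : Algebra.FormallySmooth (MvPolynomial (Fin n) A) T := Algebra.FormallySmooth.of_isLocalization P.primeCompl
  have : Algebra.FormallySmooth A T := Algebra.FormallySmooth.comp A (MvPolynomial (Fin n) A) T
  let b : Module.Basis (Fin n) T Ω[T⁄A] :=
    (mvPolynomialBasis A (Fin n)).ofIsLocalizedModule T P.primeCompl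
      (KaehlerDifferential.map A A (MvPolynomial (Fin n) A) T)
  have hb : ∀ (p : (MvPolynomial (Fin n) A)) i, b.repr (D A T (algebraMap (MvPolynomial (Fin n) A) T p)) i = algebraMap (MvPolynomial (Fin n) A) T (pderiv i p) := by
    intro p i
    rw [← KaehlerDifferential.map_D A A (MvPolynomial (Fin n) A) T, Module.Basis.ofIsLocalizedModule_repr_apply,
      mvPolynomialBasis_repr_apply]
  have : Module.Free T Ω[T⁄A] := Module.Free.of_basis b
  have : Module.Finite T Ω[T⁄A] := Module.Finite.of_basis b
  have : IsNoetherianRing T := IsLocalization.isNoetherianRing P.primeCompl T inferInstance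
  have hK0 : ∀ p : (MvPolynomial (Fin n) A), algebraMap T K (algebraMap (MvPolynomial (Fin n) A) T p) = 0 ↔ p ∈ P := by
    intro p
    rw [← IsLocalization.AtPrime.to_map_mem_maximal_iff T P p]
    exact IsLocalRing.residue_eq_zero_iff _
  rw [Algebra.FormallySmooth.iff_injective_cotangentComplexBaseChange T K hsurj
    (IsNoetherian.noetherian _) ?_]
  swap
  · intro x hx
    obtain ⟨t, rfl⟩ := hsurj x
    refine (RingHom.mem_ker).mpr ?_
    change g _ = 0
    rw [hg]
    refine (IsLocalRing.residue_eq_zero_iff t).mpr ?_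
    rw [IsLocalRing.mem_maximalIdeal] at hx ⊢
    exact fun h => hx (h.map _)
  let bK : Module.Basis (Fin n) K (K ⊗[T] Ω[T⁄A]) := b.baseChange K
  let Φ := cotangentComplexBaseChange A L T K
  let N := RingHom.ker (algebraMap T L)
  have hIN : ∀ p ∈ I, algebraMap (MvPolynomial (Fin n) A) T p ∈ N := fun p hp =>
    (hker _).mpr ⟨1, P.primeCompl.one_mem, p, hp, by simp⟩
  let w : I → N := fun p => ⟨algebraMap (MvPolynomial (Fin n) A) T p, hIN p p.2⟩
  let v : I → K ⊗[T] N := fun p => 1 ⊗ₜ w p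
  let ev : (K ⊗[T] Ω[T⁄A]) ≃ₗ[K] (Fin n → K) := bK.equivFun
  have hΦ : ∀ p : I, ev (Φ (v p)) = fun i => algebraMap T K (algebraMap (MvPolynomial (Fin n) A) T (pderiv i p.1)) := by
    intro p
    ext i
    have h1 : Φ (v p) = 1 ⊗ₜ D A T (algebraMap (MvPolynomial (Fin n) A) T p.1) :=
      (cotangentComplexBaseChange_tmul (R := A) (S := L) (P := T) (A := K) 1 (w p)).trans
        (one_smul _ _)
    rw [h1]
    simp only [ev, bK, Module.Basis.equivFun_apply, Module.Basis.baseChange_repr_tmul]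
    rw [hb, Algebra.smul_def, mul_one]
  have hunit : ∀ u ∉ P, IsUnit (algebraMap (MvPolynomial (Fin n) A) T u) := fun u hu =>
    IsLocalization.map_units T (⟨u, hu⟩ : P.primeCompl)
  have hwspan : Submodule.span T (Set.range w) = ⊤ := by
    rw [eq_top_iff]
    rintro ⟨t, ht⟩ -
    obtain ⟨u, hu, p, hp, hup⟩ := (hker t).mp ht
    rw [← Submodule.smul_mem_iff_of_isUnit _ (hunit u hu)]
    have : algebraMap (MvPolynomial (Fin n) A) T u • (⟨t, ht⟩ : N) = w ⟨p, hp⟩ := Subtype.ext hup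
    rw [this]
    exact Submodule.subset_span ⟨_, rfl⟩
  have hvspan : Submodule.span K (Set.range v) = ⊤ := by
    have := Submodule.baseChange_span (R := T) (A := K) (Set.range w)
    rw [hwspan, Submodule.baseChange_top, ← Set.range_comp] at this
    exact this.symm
  have hdet : ∀ (r : ℕ) (f : Fin r → (MvPolynomial (Fin n) A)) (c : Fin r → Fin n),
      (Matrix.of fun i j : Fin r => algebraMap T K (algebraMap (MvPolynomial (Fin n) A) T (pderiv (c j) (f i)))).det
      = algebraMap T K (algebraMap (MvPolynomial (Fin n) A) T
        (Matrix.of fun i j : Fin r => pderiv (c j) (f i)).det) := by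
    intro r f c
    rw [RingHom.map_det, RingHom.map_det]
    rfl
  constructor
  · intro hinj
    obtain ⟨κ, a, ha, hspan, hli⟩ := exists_linearIndependent' K v
    rw [hvspan] at hspan
    have : Module.Finite T N := inferInstance
    let B := Module.Basis.mk hli hspan.ge
    have : Finite κ := Module.Finite.finite_basis B
    obtain ⟨r, ⟨e⟩⟩ := Finite.exists_equiv_fin κ
    have hgen : Submodule.span T (Set.range (w ∘ a)) = ⊤ :=
      IsLocalRing.span_eq_top_of_tmul_eq_basis (w ∘ a) B (fun i => by simp [B, v])
    let f : Fin r → MvPolynomial (Fin n) A := fun i => (a (e.symm i)).1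
    have hli2 : LinearIndependent K (fun i : Fin r => fun j =>
        algebraMap T K (algebraMap (MvPolynomial (Fin n) A) T (pderiv j (f i)))) := by
      have h1 := (hli.comp e.symm e.symm.injective).map' Φ (LinearMap.ker_eq_bot.mpr hinj)
      have h2 := h1.map' ev.toLinearMap ev.ker
      have h3 : (ev.toLinearMap ∘ Φ ∘ (v ∘ a) ∘ e.symm) = (fun i : Fin r => fun j =>
          algebraMap T K (algebraMap (MvPolynomial (Fin n) A) T (pderiv j (f i)))) :=
        funext fun i => hΦ (a (e.symm i))
      exact h3 ▸ h2
    obtain ⟨c, hc, hcd⟩ := minor_of_linearIndependent _ hli2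
    refine ⟨r, ?_, f, fun i => (a (e.symm i)).2, c, hc, ?_, ?_⟩
    · simpa using Fintype.card_le_of_injective c hc
    · -- for each p, an s
      have hp : ∀ p ∈ I, ∃ s ∉ P, s * p ∈ Ideal.span (Set.range f) := by
        intro p hp
        have h1 : w ⟨p, hp⟩ ∈ Submodule.span T (Set.range (w ∘ a)) := hgen ▸ Submodule.mem_top
        have h2 : algebraMap (MvPolynomial (Fin n) A) T p ∈ (Ideal.span (Set.range f)).map (algebraMap (MvPolynomial (Fin n) A) T) := by
          have h3 := Submodule.mem_map_of_mem (f := N.subtype) h1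
          rw [Submodule.map_span] at h3
          refine (Submodule.span_le.mpr ?_ : Submodule.span T _ ≤
            (Ideal.span (Set.range f)).map (algebraMap (MvPolynomial (Fin n) A) T)) h3
          rintro _ ⟨_, ⟨k, rfl⟩, rfl⟩
          refine Ideal.mem_map_of_mem _ (Ideal.subset_span ⟨e k, ?_⟩)
          simp [f]
        rw [IsLocalization.algebraMap_mem_map_algebraMap_iff P.primeCompl] at h2
        obtain ⟨s, hs, h⟩ := h2
        exact ⟨s, hs, h⟩
      obtain ⟨S, hS⟩ := (IsNoetherian.noetherian I : I.FG)
      have : ∀ S' : Finset (MvPolynomial (Fin n) A), (↑S' : Set (MvPolynomial (Fin n) A)) ⊆ I →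
          ∃ s ∉ P, ∀ p ∈ S', s * p ∈ Ideal.span (Set.range f) := by
        intro S'
        induction S' using Finset.induction_on with
        | empty => exact fun _ => ⟨1, P.primeCompl.one_mem, by simp⟩
        | insert x S' hx ih =>
          intro hS'
          rw [Finset.coe_insert, Set.insert_subset_iff] at hS'
          obtain ⟨s, hs, h⟩ := ih hS'.2
          obtain ⟨t, ht, h'⟩ := hp x hS'.1
          refine ⟨s * t, P.primeCompl.mul_mem hs ht, ?_⟩
          intro p hp
          rcases Finset.mem_insert.mp hp with rfl | hp
          · rw [mul_assoc]; exact Ideal.mul_mem_left _ _ h'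
          · rw [mul_comm s, mul_assoc]; exact Ideal.mul_mem_left _ _ (h p hp)
      obtain ⟨s, hs, h⟩ := this S (hS ▸ Submodule.subset_span)
      refine ⟨s, hs, fun p hp => ?_⟩
      rw [← hS] at hp
      induction hp using Submodule.span_induction with
      | mem x hx => exact h x hx
      | zero => simp
      | add x y _ _ hx hy => rw [mul_add]; exact add_mem hx hy
      | smul a x _ hx => rw [smul_eq_mul, mul_left_comm]; exact Ideal.mul_mem_left _ _ hx
    · rw [← hK0, ← hdet]
      exact hcd
  · rintro ⟨r, -, f, hf, c, hc, ⟨s, hs, hsI⟩, hm⟩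
    let F : Fin r → K ⊗[T] N := fun i => v ⟨f i, hf i⟩
    have hspan : Submodule.span K (Set.range F) = ⊤ := by
      have hws : Submodule.span T (Set.range fun i => w ⟨f i, hf i⟩) = ⊤ := by
        rw [eq_top_iff, ← hwspan, Submodule.span_le]
        rintro _ ⟨p, rfl⟩
        change _ ∈ Submodule.span _ _
        rw [← Submodule.smul_mem_iff_of_isUnit _ (hunit s hs)]
        obtain ⟨d, hd⟩ := (Submodule.mem_span_range_iff_exists_fun _).mp (hsI p.1 p.2)
        rw [Submodule.mem_span_range_iff_exists_fun]
        refine ⟨fun i => algebraMap (MvPolynomial (Fin n) A) T (d i), ?_⟩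
        apply Subtype.ext
        have := congrArg (algebraMap (MvPolynomial (Fin n) A) T) hd
        simpa [w, -algebraMap_smul, Algebra.smul_def] using this
      have := Submodule.baseChange_span (R := T) (A := K) (Set.range fun i => w ⟨f i, hf i⟩)
      rw [hws, Submodule.baseChange_top, ← Set.range_comp] at this
      exact this.symm
    have hli : LinearIndependent K (fun i : Fin r => ev (Φ (F i))) := by
      apply linearIndependent_of_minor _ c
      have : (Matrix.of fun i j : Fin r => ev (Φ (F i)) (c j)) =
        (Matrix.of fun i j : Fin r => algebraMap T K (algebraMap (MvPolynomial (Fin n) A) T (pderiv (c j) (f i)))) := by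
        ext i j
        exact congrFun (hΦ ⟨f i, hf i⟩) (c j)
      rw [this, hdet]
      exact fun h => hm ((hK0 _).mp h)
    have hli' : LinearIndependent K (Φ ∘ F) := LinearIndependent.of_comp ev.toLinearMap hli
    change Function.Injective Φ
    rw [injective_iff_map_eq_zero]
    intro x hx
    obtain ⟨d, rfl⟩ := (Submodule.mem_span_range_iff_exists_fun _).mp
      (hspan ▸ Submodule.mem_top : x ∈ Submodule.span K (Set.range F))
    rw [map_sum] at hx
    simp only [map_smul] at hx
    have := Fintype.linearIndependent_iff.mp hli' d hx
    simp [this]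

theorem not_HIdeal_le_iff {A : Type u} [CommRing A]
    {n : ℕ} (I : Ideal (MvPolynomial (Fin n) A))
    (P : Ideal (MvPolynomial (Fin n) A ⧸ I)) (hP : P.IsPrime) :
    ¬ HIdeal I ≤ P ↔ ∃ (r : ℕ) (_ : r ≤ n) (f : Fin r → MvPolynomial (Fin n) A)
      (_ : ∀ i, f i ∈ I) (c : Fin r → Fin n) (_ : Function.Injective c),
      (∃ s ∉ P.comap (Ideal.Quotient.mk I), ∀ p ∈ I, s * p ∈ Ideal.span (Set.range f)) ∧
      Matrix.det (Matrix.of fun i j : Fin r => MvPolynomial.pderiv (c j) (f i)) ∉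
        P.comap (Ideal.Quotient.mk I) := by
  have hP' : (P.comap (Ideal.Quotient.mk I)).IsPrime := hP.comap _
  rw [HIdeal, hP.radical_le_iff, Ideal.map_le_iff_le_comap, preHIdeal]
  simp only [iSup_le_iff, not_forall]
  refine exists_congr fun r => exists_congr fun hr => exists_congr fun f => exists_congr fun hf => ?_
  rw [hP'.mul_le, not_or]
  constructor
  · rintro ⟨h1, h2⟩
    obtain ⟨s, hs, hsP⟩ := SetLike.not_le_iff_exists.mp h1
    have : ∃ c : Fin r → Fin n, ∃ _ : Function.Injective c,
        Matrix.det (Matrix.of fun i j : Fin r => MvPolynomial.pderiv (c j) (f i)) ∉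
        P.comap (Ideal.Quotient.mk I) := by
      by_contra! hcon
      apply h2
      rw [jacobiDelta, Ideal.span_le]
      rintro _ ⟨c, hc, rfl⟩
      exact hcon c hc
    obtain ⟨c, hc, hd⟩ := this
    refine ⟨c, hc, ⟨s, hsP, fun p hp => ?_⟩, hd⟩
    exact Submodule.mem_colon.mp hs p hp
  · rintro ⟨c, hc, ⟨s, hsP, hs⟩, hd⟩
    refine ⟨fun h => hsP (h (Submodule.mem_colon.mpr hs)), fun h => hd (h ?_)⟩
    exact Ideal.subset_span ⟨c, hc, rfl⟩

theorem formallySmooth_iff_not_HIdeal_le {A : Type u} [CommRing A] [IsNoetherianRing A]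
    {n : ℕ} (I : Ideal (MvPolynomial (Fin n) A))
    (P : Ideal (MvPolynomial (Fin n) A ⧸ I)) (hP : P.IsPrime)
    (L : Type u) [CommRing L] [Algebra (MvPolynomial (Fin n) A ⧸ I) L]
    [IsLocalization.AtPrime L P] [Algebra A L]
    [IsScalarTower A (MvPolynomial (Fin n) A ⧸ I) L] :
    Algebra.FormallySmooth A L ↔ ¬ HIdeal I ≤ P := by
  have hP' : (P.comap (Ideal.Quotient.mk I)).IsPrime := hP.comap _
  rw [not_HIdeal_le_iff I P hP]
  have : IsLocalRing L := IsLocalization.AtPrime.isLocalRing L P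
  let T := Localization.AtPrime (P.comap (Ideal.Quotient.mk I))
  let g : MvPolynomial (Fin n) A →+* L :=
    (algebraMap (MvPolynomial (Fin n) A ⧸ I) L).comp (Ideal.Quotient.mk I)
  have hgu : ∀ y : (P.comap (Ideal.Quotient.mk I)).primeCompl, IsUnit (g y) := fun y =>
    IsLocalization.map_units L (⟨Ideal.Quotient.mk I y, y.2⟩ : P.primeCompl)
  let φ : T →+* L := IsLocalization.lift hgu
  have hφ : ∀ p, φ (algebraMap _ T p) = g p := fun p => IsLocalization.lift_eq hgu p
  let : Algebra T L := φ.toAlgebra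
  have : IsScalarTower A T L := by
    refine IsScalarTower.of_algebraMap_eq fun a => ?_
    rw [IsScalarTower.algebraMap_apply A (MvPolynomial (Fin n) A) T]
    refine Eq.trans ?_ (hφ _).symm
    rw [IsScalarTower.algebraMap_apply A (MvPolynomial (Fin n) A ⧸ I) L]
    rfl
  refine local_criterion I (P.comap (Ideal.Quotient.mk I)) T L ?_ ?_
  · intro x
    obtain ⟨⟨b, s⟩, hbs⟩ := IsLocalization.surj P.primeCompl x
    obtain ⟨b, rfl⟩ := Ideal.Quotient.mk_surjective b
    obtain ⟨s, hs⟩ := s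
    obtain ⟨s, rfl⟩ := Ideal.Quotient.mk_surjective s
    refine ⟨IsLocalization.mk' T b
      (⟨s, hs⟩ : (P.comap (Ideal.Quotient.mk I)).primeCompl), ?_⟩
    change φ _ = x
    rw [IsLocalization.lift_mk'_spec, mul_comm]
    exact hbs.symm
  · intro t
    change φ t = 0 ↔ _
    constructor
    · intro ht
      obtain ⟨⟨a, s⟩, has⟩ := IsLocalization.surj (P.comap (Ideal.Quotient.mk I)).primeCompl t
      have h1 : g a = 0 := by
        rw [← hφ, ← has, map_mul, ht, zero_mul]
      obtain ⟨⟨m, hm⟩, hma⟩ := (IsLocalization.map_eq_zero_iff P.primeCompl L _).mp h1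
      obtain ⟨m, rfl⟩ := Ideal.Quotient.mk_surjective m
      refine ⟨m * s, (P.comap (Ideal.Quotient.mk I)).primeCompl.mul_mem hm s.2, m * a, ?_, ?_⟩
      · rw [← Ideal.Quotient.eq_zero_iff_mem, map_mul]
        exact hma
      · rw [map_mul, map_mul, ← has]
        ring
    · rintro ⟨u, hu, p, hp, h⟩
      have h1 := congrArg φ h
      rw [map_mul, hφ, hφ] at h1
      have h2 : g p = 0 := by
        change algebraMap _ L (Ideal.Quotient.mk I p) = 0
        rw [Ideal.Quotient.eq_zero_iff_mem.mpr hp, map_zero]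
      rw [h2] at h1
      exact (hgu ⟨u, hu⟩).mul_right_eq_zero.mp h1

/-- **Jacobian criterion for smoothness.**  Let `A` be a Noetherian ring, `B = A[Y]/I` a
finitely presented `A`-algebra, `P` a prime of `B`, and `L` (a realization of) the
localization `B_P`.  Then `B_P` is essentially smooth over `A` — i.e. a localization of
a smooth `A`-algebra at a prime — if and only if `P` does not contain `H_{B/A}`. -/
theorem essentiallySmooth_iff_not_HIdeal_le {A : Type u} [CommRing A] [IsNoetherianRing A]
    {n : ℕ} (I : Ideal (MvPolynomial (Fin n) A))
    (P : Ideal (MvPolynomial (Fin n) A ⧸ I)) (hP : P.IsPrime)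
    (L : Type u) [CommRing L] [Algebra (MvPolynomial (Fin n) A ⧸ I) L]
    [IsLocalization.AtPrime L P] [Algebra A L]
    [IsScalarTower A (MvPolynomial (Fin n) A ⧸ I) L] :
    (∃ (C : Type u) (_ : CommRing C) (_ : Algebra A C), Algebra.Smooth A C ∧
      ∃ (Q : Ideal C) (_ : Q.IsPrime) (ψ : C →ₐ[A] L),
        @IsLocalization C _ Q.primeCompl L _ ψ.toRingHom.toAlgebra) ↔
      ¬ HIdeal I ≤ P := by
  rw [← formallySmooth_iff_not_HIdeal_le I P hP L]
  constructor
  · rintro ⟨C, _, _, hC, Q, hQ, ψ, hL⟩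
    let : Algebra C L := ψ.toRingHom.toAlgebra
    have : IsScalarTower A C L := IsScalarTower.of_algebraMap_eq fun a => (ψ.commutes a).symm
    have : IsLocalization Q.primeCompl L := hL
    have : Algebra.FormallySmooth C L := Algebra.FormallySmooth.of_isLocalization Q.primeCompl
    have : Algebra.FormallySmooth A C := hC.formallySmooth
    exact Algebra.FormallySmooth.comp A C L
  · intro hL
    have : IsLocalRing L := IsLocalization.AtPrime.isLocalRing L P
    have : Algebra.FinitePresentation A (MvPolynomial (Fin n) A ⧸ I) :=
      Algebra.FinitePresentation.of_finiteType.mp inferInstance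
    let e : L ≃ₐ[MvPolynomial (Fin n) A ⧸ I] Localization.AtPrime P :=
      IsLocalization.algEquiv P.primeCompl L (Localization.AtPrime P)
    have : Algebra.IsSmoothAt A P :=
      Algebra.FormallySmooth.of_equiv (e.restrictScalars A)
    obtain ⟨f, hf, hsm⟩ := Algebra.IsSmoothAt.exists_notMem_smooth (R := A) P
    let φ : Localization.Away f →ₐ[MvPolynomial (Fin n) A ⧸ I] L :=
      IsLocalization.liftAlgHom (M := Submonoid.powers f) (f := Algebra.ofId _ L) (by
        rintro ⟨_, k, rfl⟩
        change IsUnit (algebraMap _ L (f ^ k))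
        rw [map_pow]
        exact (IsLocalization.map_units L (⟨f, hf⟩ : P.primeCompl)).pow k)
    let ψ : Localization.Away f →ₐ[A] L := φ.restrictScalars A
    let : Algebra (Localization.Away f) L := ψ.toRingHom.toAlgebra
    have : IsScalarTower (MvPolynomial (Fin n) A ⧸ I) (Localization.Away f) L :=
      IsScalarTower.of_algebraMap_eq fun b => (φ.commutes b).symm
    let Q : Ideal (Localization.Away f) := (IsLocalRing.maximalIdeal L).comap ψ.toRingHom
    have hQ : Q.IsPrime := Ideal.IsPrime.comap _
    have hQP : Q.comap (algebraMap (MvPolynomial (Fin n) A ⧸ I) _) = P := by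
      rw [Ideal.comap_comap]
      have : ψ.toRingHom.comp (algebraMap (MvPolynomial (Fin n) A ⧸ I) (Localization.Away f)) =
          algebraMap _ L := RingHom.ext φ.commutes
      rw [this]
      exact IsLocalization.AtPrime.under_maximalIdeal L P
    refine ⟨Localization.Away f, inferInstance, inferInstance, hsm, Q, hQ, ψ, ?_⟩
    have h1 : IsLocalization
        (P.primeCompl.map (algebraMap (MvPolynomial (Fin n) A ⧸ I) (Localization.Away f))) L :=
      IsLocalization.isLocalization_of_submonoid_le (Localization.Away f) L
        (Submonoid.powers f) P.primeCompl
        (Submonoid.powers_le.mpr hf)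
    refine IsLocalization.of_le
      (P.primeCompl.map (algebraMap (MvPolynomial (Fin n) A ⧸ I) (Localization.Away f)))
      Q.primeCompl ?_ ?_
    · rintro _ ⟨y, hy, rfl⟩ hyQ
      exact hy (hQP ▸ (Ideal.mem_comap.mpr hyQ))
    · intro r hr
      by_contra hu
      exact hr (Ideal.mem_comap.mpr ((IsLocalRing.mem_maximalIdeal _).mpr hu))
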